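/- Construction of a nested family of sub-intrinsic cylinders: let $n \ge 2$, $p \in \big(\tfrac{2n}{n+2}, 2\big)$, let $(t_0,x_0) \in \mathbb{R} \times \mathbb{R}^n$, $S, R > 0$, set $Q_{S,R} := (t_0-S, t_0+S) \times B_R(x_0)$, let $f \in L^1(Q_{S,R})$, and let $\hat b \in (0, 1/2]$ with $\hat b < (n+2)p - 2n$. Set $\beta := 1 - 2\hat b$ and $\hat a := \hat b + \tfrac{2}{2p-(2-p)n}$. Then there exist a function $r : (0,S] \to (0,R]$, constants $c > 1$ and $K \ge 1$ depending only on $n$ and $p$, such that, writing $\lambda_s$ for the positive real with $\lambda_s^{2-p} = s/r(s)^2$ and $Q_s := (t_0-s, t_0+s) \times B_{r(s)}(x_0)$, the following hold for all $0 < s < \sigma \le S$ and $\gamma \in (0,1]$: (a) $r$ is continuous and strictly increasing, $r(s) \le (s/\sigma)^{\hat b} r(\sigma)$, and $r(s) \to 0$ as $s \to 0^+$; in particular $Q_s \subseteq Q_\sigma$; (b) $\fint_{Q_s} |f|\,dz \le \lambda_s^p$, i.e. each $Q_s$ is sub-intrinsic; (c) if $r(s) < (s/\sigma)^{\hat b}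 r(\sigma)$, then there exists $s_1 \in [s,\sigma)$ with $\lambda_{s_1}^p \le K \fint_{Q_{s_1}} |f|\,dz$, i.e. $Q_{s_1}$ is $K$-intrinsic; (d) if $\fint_{Q_a} |f|\,dz < \lambda_a^p / K$ for all $a \in (s_1, \sigma)$, then $\lambda_a^{2-p} \le (a/\sigma)^{\beta} \lambda_\sigma^{2-p}$ for all $a \in [s_1, \sigma]$; (e) $r(s) \le c\,\gamma^{-\hat a} r(\gamma s)$, $|Q_{\gamma s}|^{-1} \le c\,\gamma^{-n\hat a - 2} |Q_s|^{-1}$, and $\lambda_{\gamma s}^{2-p} \le c\,\gamma^{-\max\{2\hat a, \beta\}} \lambda_s^{2-p}$; (f) for every $c' > 1$ with $\tilde c := (c')^{1/\hat b}$ satisfying $\tilde c\, s \le S$, and $\bar c := \max\{\tilde c, \tilde c^{\hat a}\}$, one has $(t_0 - c's, t_0 + c's) \times B_{c' r(s)}(x_0) \subseteq Q_{\tilde c s} \subseteq (t_0 - \bar c s, t_0 + \bar c s) \times B_{\bar c\, r(s)}(x_0)$. -/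

import Mathlib

open MeasureTheory

/-- The space-time cylinder `(t₀-τ, t₀+τ) × B_ρ(x₀) ⊆ ℝ × ℝⁿ`. -/
def cyl (n : ℕ) (t₀ : ℝ) (x₀ : EuclideanSpace ℝ (Fin n)) (τ ρ : ℝ) :
    Set (ℝ × EuclideanSpace ℝ (Fin n)) :=
  Set.Ioo (t₀ - τ) (t₀ + τ) ×ˢ Metric.ball x₀ ρ

/-- For `F` continuous, nonnegative and nondecreasing in both variables, there is a positive
nondecreasing `g` such that `ρ = g s * s ^ b` satisfies `ρ ^ m * F s ρ ≤ C * s ^ k` for every `s`,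
with equality attained somewhere on each interval over which `g` is not constant. -/
theorem exists_monotone_profile {F : ℝ → ℝ → ℝ} (hFc : Continuous fun z : ℝ × ℝ => F z.1 z.2)
    (hF0 : ∀ s ρ, 0 ≤ F s ρ)
    (hFm : ∀ s s' ρ ρ', s ≤ s' → ρ ≤ ρ' → F s ρ ≤ F s' ρ')
    {m k b C S R : ℝ} (hm : 0 < m) (hk : 0 < k) (hb : 0 < b) (hC : 0 < C) (hS : 0 < S)
    (hR : 0 < R) :
    ∃ g : ℝ → ℝ,
      (∀ s ∈ Set.Ioc 0 S, 0 < g s ∧ g s * s ^ b ≤ R) ∧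
      (∀ s σ, 0 < s → s ≤ σ → σ ≤ S → g s ≤ g σ) ∧
      (∀ s ∈ Set.Ioc 0 S, (g s * s ^ b) ^ m * F s (g s * s ^ b) ≤ C * s ^ k) ∧
      (∀ s σ, 0 < s → s < σ → σ ≤ S → g s < g σ →
        ∃ a ∈ Set.Ico s σ, C * a ^ k ≤ (g a * a ^ b) ^ m * F a (g a * a ^ b)) ∧
      (∀ s ∈ Set.Ioc 0 S, ∀ γ ∈ Set.Ioc (0 : ℝ) 1, γ ^ (k / m) * g s ≤ g (γ * s)) := by
  let h : ℝ → ℝ → ℝ := fun a ρ => ρ ^ m * F a ρ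
  have hmono : ∀ a a' ρ ρ', a ≤ a' → 0 ≤ ρ → ρ ≤ ρ' → h a ρ ≤ h a' ρ' := by
    intro a a' ρ ρ' haa hρ hρρ
    exact mul_le_mul (Real.rpow_le_rpow hρ hρρ hm.le) (hFm _ _ _ _ haa hρρ) (hF0 _ _)
      (Real.rpow_nonneg (hρ.trans hρρ) _)
  have hpow : Continuous fun z : ℝ × ℝ => z.2 * z.1 ^ b :=
    continuous_snd.mul (continuous_fst.rpow_const fun _ => Or.inr hb.le)
  have hcont : Continuous fun z : ℝ × ℝ => h z.1 (z.2 * z.1 ^ b) :=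
    (hpow.rpow_const fun _ => Or.inr hm.le).mul (hFc.comp (continuous_fst.prodMk hpow))
  let G : ℝ → Set ℝ := fun s =>
    {κ | 0 ≤ κ ∧ κ * S ^ b ≤ R ∧ ∀ a ∈ Set.Icc s S, h a (κ * a ^ b) ≤ C * a ^ k}
  have hSb : 0 < S ^ b := Real.rpow_pos_of_pos hS b
  have hbdd : ∀ s, BddAbove (G s) := fun s => ⟨R / S ^ b, fun κ hκ => by
    rw [le_div_iff₀ hSb]; exact hκ.2.1⟩
  have hclosed : ∀ s, IsClosed (G s) := by
    intro s
    refine isClosed_Ici.inter (IsClosed.inter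
      (isClosed_le (continuous_id.mul continuous_const) continuous_const) ?_)
    have : {κ : ℝ | ∀ a ∈ Set.Icc s S, h a (κ * a ^ b) ≤ C * a ^ k} =
        ⋂ a ∈ Set.Icc s S, {κ : ℝ | h a (κ * a ^ b) ≤ C * a ^ k} := by
      ext; simp
    change IsClosed {κ : ℝ | ∀ a ∈ Set.Icc s S, h a (κ * a ^ b) ≤ C * a ^ k}
    rw [this]
    exact isClosed_biInter fun a _ =>
      isClosed_le (hcont.comp (continuous_const.prodMk continuous_id)) continuous_const
  have hposmem : ∀ s ∈ Set.Ioc 0 S, ∃ κ ∈ G s, 0 < κ := by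
    intro s hs
    have htend : Filter.Tendsto (fun κ : ℝ => (κ * S ^ b) ^ m * F S R) (nhdsWithin 0 (Set.Ioi 0))
        (nhds 0) := by
      have : Continuous fun κ : ℝ => (κ * S ^ b) ^ m * F S R :=
        ((continuous_id.mul continuous_const).rpow_const fun _ => Or.inr hm.le).mul
          continuous_const
      have h0 := this.tendsto 0
      simp only [zero_mul, Real.zero_rpow hm.ne'] at h0
      exact h0.mono_left nhdsWithin_le_nhds
    have htend' : Filter.Tendsto (fun κ : ℝ => κ * S ^ b) (nhdsWithin 0 (Set.Ioi 0)) (nhds 0) := by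
      have : Continuous fun κ : ℝ => κ * S ^ b := by fun_prop
      have h0 := this.tendsto 0
      simp only [zero_mul] at h0
      exact h0.mono_left nhdsWithin_le_nhds
    obtain ⟨κ, ⟨hκ1, hκ2⟩, hκ⟩ := ((htend.eventually_lt_const
      (mul_pos hC (Real.rpow_pos_of_pos hs.1 k))).and
      (htend'.eventually_lt_const hR)).and self_mem_nhdsWithin |>.exists
    have hκ' : 0 < κ := hκ
    refine ⟨κ, ⟨hκ'.le, hκ2.le, fun a ha => ?_⟩, hκ⟩
    have ha0 : 0 < a := hs.1.trans_le ha.1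
    have hab : κ * a ^ b ≤ κ * S ^ b := by gcongr; exact ha.2
    calc h a (κ * a ^ b) ≤ (κ * S ^ b) ^ m * F S R := by
          refine mul_le_mul (Real.rpow_le_rpow (by positivity) hab hm.le)
            (hFm _ _ _ _ ha.2 (hab.trans hκ2.le)) (hF0 _ _) (by positivity)
      _ ≤ C * s ^ k := hκ1.le
      _ ≤ C * a ^ k := by
          have := hs.1
          gcongr
          exact ha.1
  have hmem : ∀ s ∈ Set.Ioc 0 S, sSup (G s) ∈ G s := fun s hs =>
    (hclosed s).csSup_mem (let ⟨κ, hκ, _⟩ := hposmem s hs; ⟨κ, hκ⟩) (hbdd s)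
  have hpos : ∀ s ∈ Set.Ioc 0 S, 0 < sSup (G s) := fun s hs =>
    let ⟨κ, hκ, hκ0⟩ := hposmem s hs
    hκ0.trans_le (le_csSup (hbdd s) hκ)
  have hgm : ∀ s σ, 0 < s → s ≤ σ → σ ≤ S → sSup (G s) ≤ sSup (G σ) := by
    intro s σ hs hsσ hσ
    refine le_csSup (hbdd σ) ?_
    obtain ⟨h1, h2, h3⟩ := hmem s ⟨hs, hsσ.trans hσ⟩
    exact ⟨h1, h2, fun a ha => h3 a ⟨hsσ.trans ha.1, ha.2⟩⟩
  refine ⟨fun s => sSup (G s), fun s hs => ⟨hpos s hs, ?_⟩, hgm,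
    fun s hs => (hmem s hs).2.2 s ⟨le_rfl, hs.2⟩, ?_, ?_⟩
  · refine le_trans ?_ (hmem s hs).2.1
    have := hpos s hs
    have := hs.1
    gcongr
    exact hs.2
  · intro s σ hs hsσ hσ hlt
    by_contra! hcon
    have hσ0 := hs.trans hsσ
    have hg0 : 0 < sSup (G s) := hpos s ⟨hs, hsσ.le.trans hσ⟩
    have hstrict : ∀ a ∈ Set.Icc s σ, h a (sSup (G s) * a ^ b) < C * a ^ k := by
      intro a ha
      have ha0 : 0 < a := hs.trans_le ha.1
      rcases ha.2.lt_or_eq with haσ | rfl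
      · refine lt_of_le_of_lt (hmono a a _ _ le_rfl (by positivity) ?_) (hcon a ⟨ha.1, haσ⟩)
        have := hgm s a hs ha.1 (ha.2.trans hσ)
        gcongr
      · have h1 := (hmem a ⟨ha0, hσ⟩).2.2 a ⟨le_rfl, hσ⟩
        have hab : 0 < a ^ b := Real.rpow_pos_of_pos ha0 b
        have hρ : sSup (G s) * a ^ b < sSup (G a) * a ^ b := by gcongr
        rcases (hF0 a (sSup (G s) * a ^ b)).eq_or_lt with h0 | h0
        · change (sSup (G s) * a ^ b) ^ m * F a (sSup (G s) * a ^ b) < _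
          rw [← h0, mul_zero]
          positivity
        · refine lt_of_lt_of_le ?_ h1
          exact mul_lt_mul (Real.rpow_lt_rpow (by positivity) hρ hm)
            (hFm _ _ _ _ le_rfl hρ.le) h0
            (Real.rpow_nonneg (mul_pos (hpos a ⟨ha0, hσ⟩) hab).le _)
    have hev : ∀ᶠ κ in nhds (sSup (G s)), ∀ a ∈ Set.Icc s σ, h a (κ * a ^ b) < C * a ^ k := by
      refine isCompact_Icc.eventually_forall_of_forall_eventually fun a ha => ?_
      have hc : Continuous fun z : ℝ × ℝ => h z.2 (z.1 * z.2 ^ b) := hcont.comp continuous_swap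
      exact (hc.tendsto (sSup (G s), a)).eventually_lt
        ((continuous_const.mul (continuous_snd.rpow_const fun _ => Or.inr hk.le)).tendsto
          (sSup (G s), a)) (hstrict a ha)
    obtain ⟨κ, ⟨hκ1, hκ2⟩, hκ3⟩ := (((hev.and (eventually_lt_nhds hlt)).filter_mono
      nhdsWithin_le_nhds).and (self_mem_nhdsWithin (s := Set.Ioi (sSup (G s))))).exists
    have hκ3' : sSup (G s) < κ := hκ3
    refine absurd (le_csSup (hbdd s) ?_) (not_le.mpr hκ3')
    have hκ0 := hg0.trans hκ3'
    obtain ⟨_, h2, h3⟩ := hmem σ ⟨hσ0, hσ⟩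
    refine ⟨hκ0.le, le_trans (by gcongr) h2, fun a ha => ?_⟩
    rcases le_total a σ with haσ | haσ
    · exact (hκ1 a ⟨ha.1, haσ⟩).le
    · have ha0 : 0 < a := hs.trans_le ha.1
      exact (hmono a a _ _ le_rfl (by positivity) (by gcongr)).trans (h3 a ⟨haσ, ha.2⟩)
  · intro s hs γ hγ
    obtain ⟨hs0, hsS⟩ := hs
    obtain ⟨hγ0, hγ1⟩ := hγ
    obtain ⟨h1, h2, h3⟩ := hmem s ⟨hs0, hsS⟩
    have hγk : γ ^ (k / m) ≤ 1 := Real.rpow_le_one hγ0.le hγ1 (by positivity)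
    have hγk0 : 0 < γ ^ (k / m) := Real.rpow_pos_of_pos hγ0 _
    have hle : γ ^ (k / m) * sSup (G s) ≤ sSup (G s) := mul_le_of_le_one_left h1 hγk
    refine le_csSup (hbdd _) ⟨by positivity, le_trans (by gcongr) h2, fun a ha => ?_⟩
    have ha0 : 0 < a := (mul_pos hγ0 hs0).trans_le ha.1
    rcases le_total s a with hsa | has
    · exact (hmono a a _ _ le_rfl (by positivity) (by gcongr)).trans (h3 a ⟨hsa, ha.2⟩)
    · have hρ : γ ^ (k / m) * sSup (G s) * a ^ b ≤ γ ^ (k / m) * (sSup (G s) * s ^ b) := by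
        rw [mul_assoc]
        gcongr
      calc h a (γ ^ (k / m) * sSup (G s) * a ^ b)
          ≤ h a (γ ^ (k / m) * (sSup (G s) * s ^ b)) :=
            hmono _ _ _ _ le_rfl (by positivity) hρ
        _ = γ ^ k * ((sSup (G s) * s ^ b) ^ m * F a (γ ^ (k / m) * (sSup (G s) * s ^ b))) := by
            change (_ * _) ^ m * _ = _
            rw [Real.mul_rpow hγk0.le (by positivity), ← Real.rpow_mul hγ0.le,
              div_mul_cancel₀ _ hm.ne', mul_assoc]
        _ ≤ γ ^ k * h s (sSup (G s) * s ^ b) := by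
            refine mul_le_mul_of_nonneg_left ?_ (by positivity)
            refine mul_le_mul_of_nonneg_left (hFm _ _ _ _ has ?_) (by positivity)
            exact mul_le_of_le_one_left (by positivity) hγk
        _ ≤ γ ^ k * (C * s ^ k) := by
            gcongr
            exact h3 s ⟨le_rfl, hsS⟩
        _ = C * (γ * s) ^ k := by rw [Real.mul_rpow hγ0.le hs0.le]; ring
        _ ≤ C * a ^ k := by
            gcongr
            exact ha.1

theorem measurableSet_cyl (n : ℕ) (t₀ : ℝ) (x₀ : EuclideanSpace ℝ (Fin n)) (τ ρ : ℝ) :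
    MeasurableSet (cyl n t₀ x₀ τ ρ) :=
  measurableSet_Ioo.prod measurableSet_ball

theorem cyl_subset_cyl {n : ℕ} {t₀ : ℝ} {x₀ : EuclideanSpace ℝ (Fin n)} {τ τ' ρ ρ' : ℝ}
    (hτ : τ ≤ τ') (hρ : ρ ≤ ρ') : cyl n t₀ x₀ τ ρ ⊆ cyl n t₀ x₀ τ' ρ' :=
  Set.prod_mono (Set.Ioo_subset_Ioo (by linarith) (by linarith)) (Metric.ball_subset_ball hρ)

theorem volume_cyl {n : ℕ} (t₀ : ℝ) (x₀ : EuclideanSpace ℝ (Fin n)) {τ ρ : ℝ}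
    (hτ : 0 < τ) (hρ : 0 < ρ) :
    volume (cyl n t₀ x₀ τ ρ) = ENNReal.ofReal
      (2 * volume.real (Metric.ball (0 : EuclideanSpace ℝ (Fin n)) 1) * (τ * ρ ^ n)) := by
  have hball : volume (Metric.ball x₀ ρ) = ENNReal.ofReal
      (ρ ^ n * volume.real (Metric.ball (0 : EuclideanSpace ℝ (Fin n)) 1)) := by
    rw [Measure.addHaar_ball_of_pos _ _ hρ, finrank_euclideanSpace_fin,
      ENNReal.ofReal_mul (by positivity), ofReal_measureReal measure_ball_lt_top.ne]
  rw [cyl, Measure.volume_eq_prod, Measure.prod_prod, Real.volume_Ioo, hball,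
    ← ENNReal.ofReal_mul (by linarith)]
  congr 1
  ring

theorem volume_real_unitBall_pos (n : ℕ) :
    0 < volume.real (Metric.ball (0 : EuclideanSpace ℝ (Fin n)) 1) :=
  ENNReal.toReal_pos (Metric.measure_ball_pos _ _ one_pos).ne' measure_ball_lt_top.ne

theorem setAverage_cyl {n : ℕ} (t₀ : ℝ) (x₀ : EuclideanSpace ℝ (Fin n)) {τ ρ : ℝ}
    (hτ : 0 < τ) (hρ : 0 < ρ) (f : ℝ × EuclideanSpace ℝ (Fin n) → ℝ) :
    (⨍ z in cyl n t₀ x₀ τ ρ, f z) = (∫ z in cyl n t₀ x₀ τ ρ, f z) /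
      (2 * volume.real (Metric.ball (0 : EuclideanSpace ℝ (Fin n)) 1) * (τ * ρ ^ n)) := by
  have hω := volume_real_unitBall_pos n
  rw [setAverage_eq, measureReal_def, volume_cyl t₀ x₀ hτ hρ,
    ENNReal.toReal_ofReal (by positivity), smul_eq_mul, div_eq_inv_mul]

/-- The integral of an integrable function over `cyl n t₀ x₀ τ ρ` depends continuously on the
height `τ` and the radius `ρ`. -/
theorem continuous_setIntegral_cyl {n : ℕ} (hn : n ≠ 0) (t₀ : ℝ) (x₀ : EuclideanSpace ℝ (Fin n))
    {f : ℝ × EuclideanSpace ℝ (Fin n) → ℝ} (hf : Integrable f) :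
    Continuous fun w : ℝ × ℝ => ∫ z in cyl n t₀ x₀ w.1 w.2, f z := by
  have hne : Nonempty (Fin n) := ⟨⟨0, Nat.pos_of_ne_zero hn⟩⟩
  simp_rw [← integral_indicator (measurableSet_cyl n t₀ x₀ _ _)]
  rw [continuous_iff_continuousAt]
  rintro ⟨τ, ρ⟩
  refine continuousAt_of_dominated (bound := fun z => ‖f z‖) ?_ ?_ hf.norm ?_
  · exact .of_forall fun w => (hf.indicator (measurableSet_cyl n t₀ x₀ _ _)).aestronglyMeasurable
  · exact .of_forall fun w => .of_forall fun z => norm_indicator_le_norm_self _ _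
  · have h1 : ∀ᵐ z : ℝ × EuclideanSpace ℝ (Fin n), z.1 ∉ ({t₀ - τ, t₀ + τ} : Set ℝ) :=
      Measure.quasiMeasurePreserving_fst.ae (p := fun t : ℝ => t ∉ ({t₀ - τ, t₀ + τ} : Set ℝ))
        (measure_eq_zero_iff_ae_notMem.mp ((Set.toFinite _).measure_zero _))
    have h2 : ∀ᵐ z : ℝ × EuclideanSpace ℝ (Fin n), z.2 ∉ Metric.sphere x₀ ρ :=
      Measure.quasiMeasurePreserving_snd.ae
        (p := fun x : EuclideanSpace ℝ (Fin n) => x ∉ Metric.sphere x₀ ρ)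
        (measure_eq_zero_iff_ae_notMem.mp (Measure.addHaar_sphere _ _ _))
    filter_upwards [h1, h2] with z hz1 hz2
    simp only [Set.mem_insert_iff, Set.mem_singleton_iff, not_or] at hz1
    rw [Metric.mem_sphere] at hz2
    have hc1 : Filter.Tendsto (fun w : ℝ × ℝ => t₀ - w.1) (nhds (τ, ρ)) (nhds (t₀ - τ)) :=
      (continuous_const.sub continuous_fst).tendsto (τ, ρ)
    have hc2 : Filter.Tendsto (fun w : ℝ × ℝ => t₀ + w.1) (nhds (τ, ρ)) (nhds (t₀ + τ)) :=
      (continuous_const.add continuous_fst).tendsto (τ, ρ)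
    have hc3 : Filter.Tendsto (fun w : ℝ × ℝ => w.2) (nhds (τ, ρ)) (nhds ρ) :=
      continuous_snd.tendsto (τ, ρ)
    by_cases hz : z ∈ cyl n t₀ x₀ τ ρ
    · refine ContinuousAt.congr (f := fun _ => f z) continuousAt_const ?_
      filter_upwards [hc1.eventually_lt_const hz.1.1, hc2.eventually_const_lt hz.1.2,
        hc3.eventually_const_lt hz.2] with w hw1 hw2 hw3
      exact (Set.indicator_of_mem (s := cyl n t₀ x₀ w.1 w.2) ⟨⟨hw1, hw2⟩, hw3⟩ f).symm
    · refine ContinuousAt.congr (f := fun _ => (0 : ℝ)) continuousAt_const ?_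
      have hout : z.1 < t₀ - τ ∨ t₀ + τ < z.1 ∨ ρ < dist z.2 x₀ := by
        by_contra! hcon
        exact hz ⟨⟨lt_of_le_of_ne hcon.1 (Ne.symm hz1.1), lt_of_le_of_ne hcon.2.1 hz1.2⟩,
          lt_of_le_of_ne hcon.2.2 hz2⟩
      have hev : ∀ᶠ w : ℝ × ℝ in nhds (τ, ρ), z ∉ cyl n t₀ x₀ w.1 w.2 := by
        rcases hout with h | h | h
        · filter_upwards [hc1.eventually_const_lt h] with w hw hzw
          exact absurd hzw.1.1 hw.le.not_gt
        · filter_upwards [hc2.eventually_lt_const h] with w hw hzw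
          exact absurd hzw.1.2 hw.le.not_gt
        · filter_upwards [hc3.eventually_lt_const h] with w hw hzw
          exact absurd (Metric.mem_ball.mp hzw.2) hw.le.not_gt
      filter_upwards [hev] with w hw
      exact (Set.indicator_of_notMem hw f).symm

/-- The power of the scaling parameter `λ = (s / r ^ 2) ^ (2 - p)⁻¹`, times the volume factor of
the cylinder of height `s` and radius `r`, splits into a power of `s` and a power of `r`. -/
theorem scaling_rpow_mul_volume {n : ℕ} {p s r : ℝ} (hp : p < 2) (hs : 0 < s) (hr : 0 < r) :
    r ^ ((2 * p - (2 - p) * n) / (2 - p)) * (((s / r ^ 2) ^ (2 - p)⁻¹) ^ p * (s * r ^ n)) =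
      s ^ (2 / (2 - p)) := by
  have h2p : 2 - p ≠ 0 := by linarith
  rw [← Real.rpow_mul (by positivity), Real.div_rpow hs.le (by positivity),
    ← Real.rpow_natCast r 2, ← Real.rpow_natCast r n, ← Real.rpow_mul hr.le]
  have h1 : s ^ (2 / (2 - p)) = s ^ ((2 - p)⁻¹ * p) * s := by
    rw [← Real.rpow_add_one hs.ne']
    congr 1
    field_simp
    ring
  have h2 : r ^ ((2 * p - (2 - p) * n) / (2 - p)) * r ^ (n : ℝ) =
      r ^ (((2 : ℕ) : ℝ) * ((2 - p)⁻¹ * p)) := by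
    rw [← Real.rpow_add hr]
    congr 1
    push_cast
    field_simp
    ring
  have h3 : r ^ (((2 : ℕ) : ℝ) * ((2 - p)⁻¹ * p)) ≠ 0 := (Real.rpow_pos_of_pos hr _).ne'
  calc _ = (r ^ ((2 * p - (2 - p) * n) / (2 - p)) * r ^ (n : ℝ)) /
        r ^ (((2 : ℕ) : ℝ) * ((2 - p)⁻¹ * p)) * (s ^ ((2 - p)⁻¹ * p) * s) := by ring
    _ = _ := by rw [h2, div_self h3, one_mul, h1]

/-- A function on `(0, S]` with growth rate between the exponents `b` and `e` is continuous. -/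
theorem continuousOn_of_rpow_growth {r : ℝ → ℝ} {S b e : ℝ}
    (hup : ∀ s σ, 0 < s → s ≤ σ → σ ≤ S → r s ≤ (s / σ) ^ b * r σ)
    (hlo : ∀ s σ, 0 < s → s ≤ σ → σ ≤ S → (s / σ) ^ e * r σ ≤ r s) :
    ContinuousOn r (Set.Ioc 0 S) := by
  intro σ hσ
  have hσ0 : σ ≠ 0 := hσ.1.ne'
  have hpow : ∀ a : ℝ, Filter.Tendsto (fun s : ℝ => (s / σ) ^ a * r σ)
      (nhdsWithin σ (Set.Ioc 0 S)) (nhds (r σ)) := by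
    intro a
    have hc : ContinuousAt (fun s : ℝ => (s / σ) ^ a * r σ) σ :=
      ((continuousAt_id.div_const σ).rpow_const (Or.inl (by simp [hσ0]))).mul continuousAt_const
    have := hc.tendsto
    simp only [div_self hσ0, Real.one_rpow, one_mul] at this
    exact this.mono_left nhdsWithin_le_nhds
  have hmin := (hpow b).min (hpow e)
  have hmax := (hpow b).max (hpow e)
  rw [min_self] at hmin
  rw [max_self] at hmax
  have hinv : ∀ s a : ℝ, 0 < s → (s / σ) ^ a * (σ / s) ^ a = 1 := by
    intro s a hs
    have := hσ.1
    rw [← Real.mul_rpow (by positivity) (by positivity), div_mul_div_cancel₀ hσ0,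
      div_self hs.ne', Real.one_rpow]
  refine tendsto_of_tendsto_of_tendsto_of_le_of_le' hmin hmax ?_ ?_
  · filter_upwards [self_mem_nhdsWithin] with s hs
    rcases le_total s σ with h | h
    · exact (min_le_right _ _).trans (hlo s σ hs.1 h hσ.2)
    · refine (min_le_left _ _).trans ?_
      have hpos : 0 ≤ (s / σ) ^ b := Real.rpow_nonneg (div_nonneg hs.1.le hσ.1.le) _
      have := mul_le_mul_of_nonneg_left (hup σ s hσ.1 h hs.2) hpos
      rwa [← mul_assoc, hinv s b hs.1, one_mul] at this
  · filter_upwards [self_mem_nhdsWithin] with s hs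
    rcases le_total s σ with h | h
    · exact (hup s σ hs.1 h hσ.2).trans (le_max_left _ _)
    · refine le_trans ?_ (le_max_right _ _)
      have hpos : 0 ≤ (s / σ) ^ e := Real.rpow_nonneg (div_nonneg hs.1.le hσ.1.le) _
      have := mul_le_mul_of_nonneg_left (hlo σ s hσ.1 h hs.2) hpos
      rwa [← mul_assoc, hinv s e hs.1, one_mul] at this

/-- The family of radii: it grows at a rate between `s ^ b` and `s ^ (b + 2 / (2p - (2-p)n))`, every
cylinder is sub-intrinsic, and the growth rate is exactly `s ^ b` away from intrinsic cylinders. -/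
theorem exists_subintrinsic_radius {n : ℕ} (hn : n ≠ 0) {p : ℝ}
    (hp1 : 0 < 2 * p - (2 - p) * n) (hp2 : p < 2) (t₀ : ℝ) (x₀ : EuclideanSpace ℝ (Fin n))
    {S R : ℝ} (hS : 0 < S) (hR : 0 < R) {f : ℝ × EuclideanSpace ℝ (Fin n) → ℝ}
    (hf : IntegrableOn f (cyl n t₀ x₀ S R)) {b : ℝ} (hb : 0 < b) :
    ∃ r : ℝ → ℝ,
      (∀ s ∈ Set.Ioc (0 : ℝ) S, 0 < r s ∧ r s ≤ R) ∧
      (∀ s σ, 0 < s → s ≤ σ → σ ≤ S → r s ≤ (s / σ) ^ b * r σ) ∧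
      (∀ s σ, 0 < s → s ≤ σ → σ ≤ S →
        (s / σ) ^ (b + 2 / (2 * p - (2 - p) * n)) * r σ ≤ r s) ∧
      (∀ s ∈ Set.Ioc (0 : ℝ) S, (⨍ z in cyl n t₀ x₀ s (r s), |f z|) ≤
        ((s / (r s) ^ 2) ^ (2 - p)⁻¹) ^ p) ∧
      (∀ s σ : ℝ, 0 < s → s < σ → σ ≤ S → r s < (s / σ) ^ b * r σ →
        ∃ s₁ ∈ Set.Ico s σ, ((s₁ / (r s₁) ^ 2) ^ (2 - p)⁻¹) ^ p ≤
          ⨍ z in cyl n t₀ x₀ s₁ (r s₁), |f z|) := by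
  have h2p : 0 < 2 - p := by linarith
  set ω := volume.real (Metric.ball (0 : EuclideanSpace ℝ (Fin n)) 1)
  have hω : 0 < ω := volume_real_unitBall_pos n
  let φ := (cyl n t₀ x₀ S R).indicator fun z => |f z|
  have hφ : Integrable φ := 
    (integrable_indicator_iff (measurableSet_cyl n t₀ x₀ S R)).mpr hf.abs
  have hφ0 : ∀ z, 0 ≤ φ z := fun z => Set.indicator_nonneg (fun _ _ => abs_nonneg _) z
  let F : ℝ → ℝ → ℝ := fun s ρ => ∫ z in cyl n t₀ x₀ s ρ, φ z
  have hF0 : ∀ s ρ, 0 ≤ F s ρ := fun s ρ => integral_nonneg hφ0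
  have hFm : ∀ s s' ρ ρ', s ≤ s' → ρ ≤ ρ' → F s ρ ≤ F s' ρ' := fun s s' ρ ρ' hs hρ =>
    setIntegral_mono_set hφ.integrableOn (.of_forall hφ0) (cyl_subset_cyl hs hρ).eventuallyLE
  have hFeq : ∀ s ρ, s ≤ S → ρ ≤ R → F s ρ = ∫ z in cyl n t₀ x₀ s ρ, |f z| := by
    intro s ρ hs hρ
    rw [show F s ρ = _ from setIntegral_indicator (measurableSet_cyl n t₀ x₀ S R),
      Set.inter_eq_self_of_subset_left (cyl_subset_cyl hs hρ)]
  set d := 2 * p - (2 - p) * n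
  obtain ⟨g, hg, hgm, hsub, hintr, hgrow⟩ :=
    exists_monotone_profile (continuous_setIntegral_cyl hn t₀ x₀ hφ) hF0 hFm
      (m := d / (2 - p)) (k := 2 / (2 - p)) (C := 2 * ω) (by positivity) (by positivity) hb
      (by positivity) hS hR
  rw [div_div_div_cancel_right₀ h2p.ne'] at hgrow
  have hr0 : ∀ s ∈ Set.Ioc 0 S, 0 < g s * s ^ b := fun s hs =>
    mul_pos (hg s hs).1 (Real.rpow_pos_of_pos hs.1 b)
  have key : ∀ s ∈ Set.Ioc 0 S, 2 * ω * s ^ (2 / (2 - p)) =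
      (g s * s ^ b) ^ (d / (2 - p)) *
        (((s / (g s * s ^ b) ^ 2) ^ (2 - p)⁻¹) ^ p * (2 * ω * (s * (g s * s ^ b) ^ n))) := by
    intro s hs
    rw [← scaling_rpow_mul_volume (n := n) hp2 hs.1 (hr0 s hs)]
    ring
  have hpow : ∀ s ∈ Set.Ioc 0 S, 0 < (g s * s ^ b) ^ (d / (2 - p)) := fun s hs =>
    Real.rpow_pos_of_pos (hr0 s hs) _
  have hcancel : ∀ s σ : ℝ, 0 < s → 0 < σ → (s / σ) ^ b * (g σ * σ ^ b) = g σ * s ^ b := by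
    intro s σ hs hσ
    have := (Real.rpow_pos_of_pos hσ b).ne'
    rw [Real.div_rpow hs.le hσ.le]
    field_simp
  refine ⟨fun s => g s * s ^ b, fun s hs => ⟨hr0 s hs, (hg s hs).2⟩, ?_, ?_, ?_, ?_⟩
  · intro s σ hs hsσ hσ
    rw [hcancel s σ hs (hs.trans_le hsσ)]
    exact mul_le_mul_of_nonneg_right (hgm s σ hs hsσ hσ) (Real.rpow_nonneg hs.le _)
  · intro s σ hs hsσ hσ
    have hσ0 := hs.trans_le hsσ
    have hq : 0 < s / σ := by positivity
    have := hgrow σ ⟨hσ0, hσ⟩ (s / σ) ⟨hq, (div_le_one hσ0).mpr hsσ⟩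
    rw [div_mul_cancel₀ _ hσ0.ne'] at this
    rw [Real.rpow_add hq, mul_right_comm, hcancel s σ hs hσ0, mul_right_comm, mul_comm (g σ)]
    exact mul_le_mul_of_nonneg_right this (Real.rpow_nonneg hs.le _)
  · intro s hs
    have := hr0 s hs
    have hs0 := hs.1
    rw [setAverage_cyl t₀ x₀ hs.1 (hr0 s hs), div_le_iff₀ (by positivity),
      ← hFeq s _ hs.2 (hg s hs).2]
    refine le_of_mul_le_mul_left ?_ (hpow s hs)
    rw [← key s hs]
    exact hsub s hs
  · intro s σ hs hsσ hσ hlt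
    rw [hcancel s σ hs (hs.trans hsσ)] at hlt
    obtain ⟨a, ha, hle⟩ := hintr s σ hs hsσ hσ
      (lt_of_mul_lt_mul_right hlt (Real.rpow_nonneg hs.le _))
    have ha' : a ∈ Set.Ioc 0 S := ⟨hs.trans_le ha.1, ha.2.le.trans hσ⟩
    refine ⟨a, ha, ?_⟩
    have := hr0 a ha'
    have ha0 := ha'.1
    rw [setAverage_cyl t₀ x₀ ha'.1 (hr0 a ha'), le_div_iff₀ (by positivity),
      ← hFeq a _ ha'.2 (hg a ha').2]
    refine le_of_mul_le_mul_left ?_ (hpow a ha')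
    rw [← key a ha']
    exact hle

/-- Construction of a nested family of sub-intrinsic cylinders with respect to
`f ∈ L¹(Q_{S,R})`, with scaling parameters `λ_s` given by `λ_s^{2-p} = s / r(s)²`
(so `λ_s = (s / r(s)²)^{1/(2-p)}`), for `p ∈ (2n/(n+2), 2)`. -/
theorem stmt_11 (n : ℕ) (hn : 2 ≤ n) (p : ℝ)
    (hp1 : (2 * n : ℝ) / (n + 2) < p) (hp2 : p < 2) :
    ∃ c K : ℝ, 1 < c ∧ 1 ≤ K ∧
      ∀ (t₀ : ℝ) (x₀ : EuclideanSpace ℝ (Fin n)) (S R : ℝ), 0 < S → 0 < R →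
      ∀ f : ℝ × EuclideanSpace ℝ (Fin n) → ℝ,
        IntegrableOn f (cyl n t₀ x₀ S R) →
      ∀ b : ℝ, 0 < b → b ≤ 1 / 2 → b < (n + 2) * p - 2 * n →
      ∃ r : ℝ → ℝ,
        -- (a) range, monotonicity, continuity, decay of `r`, and nestedness
        (∀ s ∈ Set.Ioc (0 : ℝ) S, 0 < r s ∧ r s ≤ R) ∧
        ContinuousOn r (Set.Ioc 0 S) ∧
        StrictMonoOn r (Set.Ioc 0 S) ∧
        Filter.Tendsto r (nhdsWithin 0 (Set.Ioc 0 S)) (nhds 0) ∧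
        (∀ s σ : ℝ, 0 < s → s < σ → σ ≤ S →
          r s ≤ (s / σ) ^ b * r σ ∧
            cyl n t₀ x₀ s (r s) ⊆ cyl n t₀ x₀ σ (r σ)) ∧
        -- (b) every cylinder is sub-intrinsic
        (∀ s ∈ Set.Ioc (0 : ℝ) S,
          (⨍ z in cyl n t₀ x₀ s (r s), |f z|) ≤
            ((s / (r s) ^ 2) ^ (2 - p)⁻¹) ^ p) ∧
        -- (c) if the growth bound is strict, some intermediate cylinder is `K`-intrinsic
        (∀ s σ : ℝ, 0 < s → s < σ → σ ≤ S → r s < (s / σ) ^ b * r σ →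
          ∃ s₁ ∈ Set.Ico s σ,
            ((s₁ / (r s₁) ^ 2) ^ (2 - p)⁻¹) ^ p ≤
              K * ⨍ z in cyl n t₀ x₀ s₁ (r s₁), |f z|) ∧
        -- (d) strict sub-intrinsicality on `(s₁, σ)` forces decay of `λ^{2-p} = s/r(s)²`
        (∀ s σ s₁ : ℝ, 0 < s → s < σ → σ ≤ S → s ≤ s₁ → s₁ < σ →
          (∀ a ∈ Set.Ioo s₁ σ,
            (⨍ z in cyl n t₀ x₀ a (r a), |f z|) <
              ((a / (r a) ^ 2) ^ (2 - p)⁻¹) ^ p / K) →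
          ∀ a ∈ Set.Icc s₁ σ,
            a / (r a) ^ 2 ≤ (a / σ) ^ (1 - 2 * b) * (σ / (r σ) ^ 2)) ∧
        -- (e) quantitative control when shrinking the time-height by `γ ∈ (0,1]`
        (∀ s ∈ Set.Ioc (0 : ℝ) S, ∀ γ ∈ Set.Ioc (0 : ℝ) 1,
          r s ≤ c * γ ^ (-(b + 2 / (2 * p - (2 - p) * n))) * r (γ * s) ∧
          (volume (cyl n t₀ x₀ (γ * s) (r (γ * s))))⁻¹ ≤
            ENNReal.ofReal (c * γ ^ (-(n * (b + 2 / (2 * p - (2 - p) * n)) + 2))) *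
              (volume (cyl n t₀ x₀ s (r s)))⁻¹ ∧
          γ * s / (r (γ * s)) ^ 2 ≤
            c * γ ^ (-(max (2 * (b + 2 / (2 * p - (2 - p) * n))) (1 - 2 * b))) *
              (s / (r s) ^ 2)) ∧
        -- (f) engulfing of dilated cylinders, with `c̃ = c'^{1/b}`, `c̄ = max{c̃, c̃^â}`
        (∀ s ∈ Set.Ioc (0 : ℝ) S, ∀ c' : ℝ, 1 < c' → c' ^ (1 / b) * s ≤ S →
          cyl n t₀ x₀ (c' * s) (c' * r s) ⊆
            cyl n t₀ x₀ (c' ^ (1 / b) * s) (r (c' ^ (1 / b) * s)) ∧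
          cyl n t₀ x₀ (c' ^ (1 / b) * s) (r (c' ^ (1 / b) * s)) ⊆
            cyl n t₀ x₀
              (max (c' ^ (1 / b)) ((c' ^ (1 / b)) ^ (b + 2 / (2 * p - (2 - p) * n))) * s)
              (max (c' ^ (1 / b)) ((c' ^ (1 / b)) ^ (b + 2 / (2 * p - (2 - p) * n))) *
                r s)) := by
  have hd : 0 < 2 * p - (2 - p) * n := by
    rw [div_lt_iff₀ (by positivity)] at hp1
    linarith
  refine ⟨2, 1, one_lt_two, le_rfl, fun t₀ x₀ S R hS hR f hf b hb _ _ => ?_⟩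
  obtain ⟨r, hr, hup, hlo, hsub, hintr⟩ :=
    exists_subintrinsic_radius (by omega) hd hp2 t₀ x₀ hS hR hf hb
  have hcont := continuousOn_of_rpow_growth hup hlo
  set e := b + 2 / (2 * p - (2 - p) * n)
  have hstrict : StrictMonoOn r (Set.Ioc 0 S) := by
    intro s hs σ hσ hlt
    refine (hup s σ hs.1 hlt.le hσ.2).trans_lt (mul_lt_of_lt_one_left (hr σ hσ).1 ?_)
    exact Real.rpow_lt_one (div_nonneg hs.1.le hσ.1.le) ((div_lt_one hσ.1).mpr hlt) hb
  have hshrink : ∀ s ∈ Set.Ioc (0 : ℝ) S, ∀ γ ∈ Set.Ioc (0 : ℝ) 1,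
      r s ≤ γ ^ (-e) * r (γ * s) := by
    intro s hs γ hγ
    have h := hlo (γ * s) s (mul_pos hγ.1 hs.1) (mul_le_of_le_one_left hs.1.le hγ.2) hs.2
    rw [mul_div_cancel_right₀ _ hs.1.ne'] at h
    rwa [Real.rpow_neg hγ.1.le, inv_mul_eq_div, le_div_iff₀' (Real.rpow_pos_of_pos hγ.1 e)]
  refine ⟨r, hr, hcont, hstrict, ?_, fun s σ hs hsσ hσ => ⟨hup s σ hs hsσ.le hσ, ?_⟩, hsub,
    ?_, ?_, ?_, ?_⟩
  · have hlim : Filter.Tendsto (fun s : ℝ => (s / S) ^ b * r S) (nhdsWithin 0 (Set.Ioc 0 S))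
        (nhds 0) := by
      have hc : Continuous fun s : ℝ => (s / S) ^ b * r S :=
        ((continuous_id.div_const S).rpow_const fun _ => Or.inr hb.le).mul continuous_const
      have h0 := hc.tendsto 0
      simp only [zero_div, Real.zero_rpow hb.ne', zero_mul] at h0
      exact h0.mono_left nhdsWithin_le_nhds
    refine tendsto_of_tendsto_of_tendsto_of_le_of_le' tendsto_const_nhds hlim ?_ ?_
    · filter_upwards [self_mem_nhdsWithin] with s hs using (hr s hs).1.le
    · filter_upwards [self_mem_nhdsWithin] with s hs using hup s S hs.1 hs.2 le_rfl
  · exact cyl_subset_cyl hsσ.le (hstrict ⟨hs, hsσ.le.trans hσ⟩ ⟨hs.trans hsσ, hσ⟩ hsσ).le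
  · simpa only [one_mul] using hintr
  · intro s σ s₁ hs hsσ hσ hs₁ hs₁σ hlt a ha
    simp only [div_one] at hlt
    have hs₁0 := hs.trans_le hs₁
    have hσ0 := hs.trans hsσ
    have hgrow : ∀ a ∈ Set.Ioo s₁ σ, (a / σ) ^ b * r σ ≤ r a := by
      intro a ha
      by_contra! hcon
      obtain ⟨a', ha', hle⟩ := hintr a σ (hs₁0.trans ha.1) ha.2 hσ hcon
      exact (hlt a' ⟨ha.1.trans_le ha'.1, ha'.2⟩).not_ge hle
    have hgrow' : (a / σ) ^ b * r σ ≤ r a := by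
      rcases ha.1.eq_or_lt with rfl | h1
      · have hmem : s₁ ∈ Set.Ioc 0 S := ⟨hs₁0, hs₁σ.le.trans hσ⟩
        have hnhds : Filter.Tendsto r (nhdsWithin s₁ (Set.Ioo s₁ σ)) (nhds (r s₁)) :=
          (hcont s₁ hmem).mono_left (nhdsWithin_mono _ fun x hx =>
            ⟨hs₁0.trans hx.1, hx.2.le.trans hσ⟩)
        have hpow : Filter.Tendsto (fun x : ℝ => (x / σ) ^ b * r σ)
            (nhdsWithin s₁ (Set.Ioo s₁ σ)) (nhds ((s₁ / σ) ^ b * r σ)) :=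
          ((((continuous_id.div_const σ).rpow_const fun _ => Or.inr hb.le).mul
            continuous_const).tendsto s₁).mono_left nhdsWithin_le_nhds
        have := left_nhdsWithin_Ioo_neBot hs₁σ
        refine le_of_tendsto_of_tendsto hpow hnhds ?_
        filter_upwards [self_mem_nhdsWithin] with x hx using hgrow x hx
      · rcases ha.2.eq_or_lt with rfl | h2
        · rw [div_self hσ0.ne', Real.one_rpow, one_mul]
        · exact hgrow a ⟨h1, h2⟩
    have ha0 : 0 < a := hs₁0.trans_le ha.1
    have hrσ := (hr σ ⟨hσ0, hσ⟩).1
    have hq : 0 < a / σ := by positivity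
    calc a / r a ^ 2 ≤ a / ((a / σ) ^ b * r σ) ^ 2 := by gcongr
      _ = (a / σ) ^ (1 - 2 * b) * (σ / r σ ^ 2) := by
          rw [Real.rpow_sub hq, Real.rpow_one, mul_comm 2 b, Real.rpow_mul hq.le, Real.rpow_two]
          field_simp
  · intro s hs γ hγ
    have hγs : γ * s ∈ Set.Ioc 0 S :=
      ⟨mul_pos hγ.1 hs.1, (mul_le_of_le_one_left hs.1.le hγ.2).trans hs.2⟩
    have h := hshrink s hs γ hγ
    have hs0 := hs.1
    have hγ0 := hγ.1
    have hr1 := (hr s hs).1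
    have hr2 := (hr _ hγs).1
    have hmono : ∀ x y : ℝ, y ≤ x → γ ^ x ≤ γ ^ y := fun x y hxy =>
      Real.rpow_le_rpow_of_exponent_ge hγ.1 hγ.2 hxy
    refine ⟨?_, ?_, ?_⟩
    · rw [mul_assoc]
      have : 0 < γ ^ (-e) * r (γ * s) := by positivity
      linarith
    · rw [volume_cyl t₀ x₀ hγs.1 hr2, volume_cyl t₀ x₀ hs.1 hr1]
      have hω := volume_real_unitBall_pos n
      set ω := volume.real (Metric.ball (0 : EuclideanSpace ℝ (Fin n)) 1)
      rw [← ENNReal.ofReal_inv_of_pos (by positivity), ← ENNReal.ofReal_inv_of_pos (by positivity),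
        ← ENNReal.ofReal_mul (by positivity)]
      refine ENNReal.ofReal_le_ofReal ?_
      rw [← div_eq_mul_inv, inv_eq_one_div, div_le_div_iff₀ (by positivity) (by positivity),
        one_mul]
      have hrn : r s ^ n ≤ γ ^ (-(n * e)) * r (γ * s) ^ n := by
        have := pow_le_pow_left₀ hr1.le h n
        rwa [mul_pow, ← Real.rpow_mul_natCast hγ.1.le, neg_mul, mul_comm e] at this
      have hγγ : γ ^ (-(n * e)) ≤ γ ^ (-(n * e + 2)) * γ := by
        rw [← Real.rpow_add_one hγ.1.ne']
        exact hmono _ _ (by linarith)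
      calc 2 * ω * (s * r s ^ n) ≤ 2 * ω * (s * (γ ^ (-(n * e + 2)) * γ * r (γ * s) ^ n)) := by
            gcongr
            exact hrn.trans (by gcongr)
        _ = 1 * (γ ^ (-(n * e + 2)) * (2 * ω * (γ * s * r (γ * s) ^ n))) := by ring
        _ ≤ 2 * (γ ^ (-(n * e + 2)) * (2 * ω * (γ * s * r (γ * s) ^ n))) := by
            gcongr
            norm_num
        _ = _ := by ring
    · have hsq : r s ^ 2 ≤ γ ^ (-(2 * e)) * r (γ * s) ^ 2 := by
        have := pow_le_pow_left₀ hr1.le h 2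
        rwa [mul_pow, ← Real.rpow_mul_natCast hγ.1.le, neg_mul, mul_comm e] at this
      have hmax := hmono _ _ (neg_le_neg (le_max_left (2 * e) (1 - 2 * b)))
      rw [← mul_div_assoc, div_le_div_iff₀ (by positivity) (by positivity)]
      calc γ * s * r s ^ 2
          ≤ 2 * s * (γ ^ (-(max (2 * e) (1 - 2 * b))) * r (γ * s) ^ 2) := by
            gcongr
            · linarith [hγ.2]
            · exact hsq.trans (by gcongr)
        _ = _ := by ring
  · intro s hs c' hc' hcS
    have hc0 : 0 < c' := one_pos.trans hc'
    have hct : 1 < c' ^ (1 / b) := Real.one_lt_rpow hc' (by positivity)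
    have hcb : (c' ^ (1 / b)) ^ b = c' := by
      rw [← Real.rpow_mul hc0.le, one_div_mul_cancel hb.ne', Real.rpow_one]
    set ct := c' ^ (1 / b)
    have hs0 := hs.1
    have hct0 : 0 < ct := one_pos.trans hct
    have hmem : ct * s ∈ Set.Ioc 0 S := ⟨by positivity, hcS⟩
    have hle : s ≤ ct * s := le_mul_of_one_le_left hs0.le hct.le
    have hdiv : s / (ct * s) = ct⁻¹ := by field_simp
    have h1 := hup s (ct * s) hs0 hle hcS
    have h2 := hlo s (ct * s) hs0 hle hcS
    rw [hdiv, Real.inv_rpow hct0.le, hcb, inv_mul_eq_div, le_div_iff₀' hc0] at h1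
    rw [hdiv, Real.inv_rpow hct0.le, inv_mul_eq_div,
      div_le_iff₀' (Real.rpow_pos_of_pos hct0 _)] at h2
    have hcc : c' ≤ ct := by
      calc c' = ct ^ b := hcb.symm
        _ ≤ ct ^ (1 : ℝ) := Real.rpow_le_rpow_of_exponent_le hct.le (by linarith)
        _ = ct := Real.rpow_one ct
    refine ⟨cyl_subset_cyl (by gcongr) h1, cyl_subset_cyl ?_ (h2.trans ?_)⟩
    · exact mul_le_mul_of_nonneg_right (le_max_left _ _) hs0.le
    · exact mul_le_mul_of_nonneg_right (le_max_right _ _) (hr s hs).1.le
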